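/- Let (X,d) be a proper geodesic metric space with a doubling Borel probability measure μ supporting a local (1,s)-Poincaré inequality for some s ≥ 1. Let 1 < q ≤ 2 and p ≥ 2 with 1/p + 1/q = 1, and consider the Hopf–Lax semigroup Q_t f(x) = inf_{y ∈ X}[ d(x,y)^p/(p·t^{p−1}) + f(y) ]. Suppose a, ρ > 0 are such that for every bounded measurable f : X → ℝ and every t ≥ 0, (∫_X e^{(a+ρt)·Q_t f} dμ)^{1/(a+ρt)} ≤ (∫_X e^{a·f} dμ)^{1/a}. Then (X,d,μ) satisfies the q-logarithmic Sobolev inequality with the constant K₀ > 0 determined by a^{2−q}·K₀^{q−1} = ρ·(q−1). -/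

import Mathlib

open Metric Filter NNReal ENNReal Topology MeasureTheory

/-- Hopf–Lax semigroup with Lagrangian `L(u) = u^p/p`:
`Q_t f(x) = inf_y [ d(x,y)^p/(p·t^{p−1}) + f(y) ]`, and `Q_0 f = f`. -/
noncomputable def hopfLaxP {X : Type*} [MetricSpace X] (p : ℝ) (f : X → ℝ)
    (t : ℝ) (x : X) : ℝ :=
  if t = 0 then f x else ⨅ y : X, (dist x y ^ p / (p * t ^ (p - 1)) + f y)

/-- The metric subgradient `|∇⁻ f|(x₀) = limsup_{x → x₀} [f(x₀) − f(x)]₊ / d(x,x₀)`. -/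
noncomputable def metricSubgradient {X : Type*} [MetricSpace X] (f : X → ℝ) (x₀ : X) : ℝ :=
  limsup (fun x => max (f x₀ - f x) 0 / dist x x₀) (𝓝[≠] x₀)

/-- The lower local Lipschitz number
`lip f(x) = liminf_{r→0⁺} sup_{d(x,y)<r} |f(x)−f(y)|/r`. -/
noncomputable def locLip {X : Type*} [MetricSpace X] (f : X → ℝ) (x : X) : ℝ :=
  liminf (fun r => sSup ((fun y => |f x - f y| / r) '' Metric.ball x r)) (𝓝[>] (0:ℝ))

/-- A Borel measure is doubling if open balls have positive finite measure and
`μ(B(x,2r)) ≤ c·μ(B(x,r))` for some constant `c ≥ 1`. -/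
def IsDoublingMeasure {X : Type*} [MetricSpace X] [MeasurableSpace X]
    (μ : Measure X) : Prop :=
  (∀ (x : X) (r : ℝ), 0 < r → 0 < μ (Metric.ball x r) ∧ μ (Metric.ball x r) < ⊤) ∧
  ∃ c : ℝ≥0∞, 1 ≤ c ∧ ∀ (x : X) (r : ℝ), 0 < r →
    μ (Metric.ball x (2 * r)) ≤ c * μ (Metric.ball x r)

/-- `(X,d,μ)` supports a local `(1,s)`-Poincaré inequality. -/
def LocalPoincareIneq {X : Type*} [MetricSpace X] [MeasurableSpace X]
    (μ : Measure X) (s : ℝ) : Prop :=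
  ∃ Λ : ℝ, 1 ≤ Λ ∧ ∃ C : ℝ, 0 < C ∧
    ∀ f : X → ℝ, (∃ K : ℝ≥0, LipschitzWith K f) → ∀ (x : X) (r : ℝ), 0 < r →
      (⨍ y in Metric.ball x r, |f y - ⨍ z in Metric.ball x r, f z ∂μ| ∂μ) ≤
        C * r * (⨍ y in Metric.ball x (Λ * r), (locLip f y) ^ s ∂μ) ^ (1 / s)

/-- The entropy functional `Ent_μ(h) = ∫ h log h dμ − (∫ h dμ)·log(∫ h dμ)`. -/
noncomputable def entropyFn {X : Type*} [MeasurableSpace X] (μ : Measure X)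
    (h : X → ℝ) : ℝ :=
  ∫ x, h x * Real.log (h x) ∂μ - (∫ x, h x ∂μ) * Real.log (∫ x, h x ∂μ)

/-- The `q`-logarithmic Sobolev inequality with constant `K`:
`Ent_μ(|f|^q) ≤ (q−1)·(q/K)^{q−1}·∫ |∇⁻ f|^q dμ` for all Lipschitz `f`. -/
def QLogSobolev {X : Type*} [MetricSpace X] [MeasurableSpace X]
    (μ : Measure X) (q K : ℝ) : Prop :=
  ∀ f : X → ℝ, (∃ Kf : ℝ≥0, LipschitzWith Kf f) →
    entropyFn μ (fun x => |f x| ^ q) ≤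
      (q - 1) * (q / K) ^ (q - 1) * ∫ x, (metricSubgradient f x) ^ q ∂μ

/-!
The Gibbs variational principle turns hypercontractivity into
`Ent (exp (a g)) ≤ (a (a + ρ t) / ρ) ∫ exp (a g) (g - Q_t g) / t` for bounded measurable `g`.
Let `t → 0`. For `g = u` Lipschitz, Young's inequality bounds the limit of `(u - Q_t u) / t` by
`|∇⁻ u| ^ q / q`. For `g = -Q_t (-u)`, the inequality `u ≤ Q_t g` leads to the same conclusion with
`|∇⁻ (-u)|`. Taking `u = (q / a) log h` gives the `q`-logarithmic Sobolev inequality for `h` bounded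
between positive constants, with either `|∇⁻ h|` or `|∇⁻ (-h)|` on the right.

The entropy of `|f| ^ q` is at most the sum of those of `(f⁺) ^ q` and `(f⁻) ^ q`. The first
inequality, for `f⁺`, and the second, for `f⁻`, only involve `|∇⁻ f|` on `{0 < f}` and on `{f ≤ 0}`
respectively, so that the sum of the two right-hand sides is controlled by `∫ |∇⁻ f| ^ q` without
comparing `|∇⁻ f|` and `|∇⁻ (-f)|`.
-/

section Entropy

variable {X : Type*} [MeasurableSpace X] {μ : Measure X}

lemma mul_le_mul_log_sub_add_exp {x : ℝ} (hx : 0 ≤ x) (y : ℝ) :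
    x * y ≤ x * Real.log x - x + Real.exp y := by
  rcases hx.eq_or_lt with rfl | hx
  · simpa using (Real.exp_pos y).le
  · have htangent := mul_le_mul_of_nonneg_left (Real.add_one_le_exp (y - Real.log x)) hx.le
    rw [Real.exp_sub, Real.exp_log hx, mul_div_cancel₀ _ hx.ne'] at htangent
    linarith

lemma two_mul_le_mul_log_add_exp_one {x : ℝ} (hx : 0 ≤ x) :
    2 * x ≤ x * Real.log x + Real.exp 1 := by
  have hyoung := mul_le_mul_log_sub_add_exp hx 1
  linarith

lemma integrable_of_integrable_mul_log [IsFiniteMeasure μ] {h : X → ℝ}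
    (hm : AEStronglyMeasurable h μ) (h0 : ∀ x, 0 ≤ h x)
    (hlog : Integrable (fun x ↦ h x * Real.log (h x)) μ) : Integrable h μ := by
  refine ((hlog.add (integrable_const (Real.exp 1))).div_const 2).mono' hm (.of_forall fun x ↦ ?_)
  rw [Real.norm_of_nonneg (h0 x), Pi.add_apply, le_div_iff₀ two_pos, mul_comm]
  exact two_mul_le_mul_log_add_exp_one (h0 x)

lemma integrable_mul_log_of_bounded [IsFiniteMeasure μ] {h : X → ℝ} (hm : Measurable h)
    (h0 : ∀ x, 0 ≤ h x) {M : ℝ} (hM : ∀ x, h x ≤ M) :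
    Integrable (fun x ↦ h x * Real.log (h x)) μ := by
  obtain ⟨C, hC⟩ := (isCompact_Icc (a := 0) (b := M)).exists_bound_of_continuousOn
    Real.continuous_mul_log.continuousOn
  exact Integrable.of_bound (Real.continuous_mul_log.measurable.comp hm).aestronglyMeasurable C
    (.of_forall fun x ↦ hC _ ⟨h0 x, hM x⟩)

lemma integrable_exp_mul_of_abs_le [IsFiniteMeasure μ] {f : X → ℝ} (hf : Measurable f) {M : ℝ}
    (hM : ∀ x, |f x| ≤ M) (c : ℝ) : Integrable (fun x ↦ Real.exp (c * f x)) μ := by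
  refine Integrable.of_bound (hf.const_mul c).exp.aestronglyMeasurable (Real.exp (|c| * M))
    (.of_forall fun x ↦ ?_)
  rw [Real.norm_of_nonneg (Real.exp_pos _).le, Real.exp_le_exp]
  calc c * f x ≤ |c * f x| := le_abs_self _
    _ = |c| * |f x| := abs_mul c (f x)
    _ ≤ |c| * M := by gcongr; exact hM x

lemma entropyFn_exp_mul (c : ℝ) (f : X → ℝ) :
    entropyFn μ (fun x ↦ Real.exp (c * f x)) = c * ∫ x, Real.exp (c * f x) * f x ∂μ -
      (∫ x, Real.exp (c * f x) ∂μ) * Real.log (∫ x, Real.exp (c * f x) ∂μ) := by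
  simp only [entropyFn, Real.log_exp, mul_left_comm _ c, integral_const_mul]

-- A junk value: the Bochner integral of a non-integrable function is `0`.
lemma entropyFn_eq_zero_of_not_integrable [IsFiniteMeasure μ] {h : X → ℝ}
    (hm : AEStronglyMeasurable h μ) (h0 : ∀ x, 0 ≤ h x) (hint : ¬ Integrable h μ) :
    entropyFn μ h = 0 := by
  rw [entropyFn, integral_undef hint,
    integral_undef (mt (integrable_of_integrable_mul_log hm h0) hint)]
  simp

lemma entropyFn_eq_integral_klFun_sub [IsProbabilityMeasure μ] {h : X → ℝ} (hint : Integrable h μ)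
    (hlog : Integrable (fun x ↦ h x * Real.log (h x)) μ) :
    entropyFn μ h =
      ∫ x, InformationTheory.klFun (h x) ∂μ - InformationTheory.klFun (∫ x, h x ∂μ) := by
  have hlog1 : Integrable (fun x ↦ h x * Real.log (h x) + 1) μ := hlog.add (integrable_const 1)
  simp only [entropyFn, InformationTheory.klFun_apply]
  rw [integral_sub hlog1 hint, integral_add hlog (integrable_const 1)]
  simp only [integral_const, probReal_univ, one_smul]
  ring

-- The Gibbs variational principle: integrate Young's inequality `x y ≤ x log x - x + exp y` at
-- `x = h` and `y = φ - log (∫ exp φ) + log (∫ h)`, for which the last two terms cancel.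
lemma integral_mul_le_entropyFn_add {h φ : X → ℝ} (h0 : ∀ x, 0 ≤ h x) (hpos : 0 < ∫ x, h x ∂μ)
    (hlog : Integrable (fun x ↦ h x * Real.log (h x)) μ)
    (hφ : Integrable (fun x ↦ h x * φ x) μ) (hexp : Integrable (fun x ↦ Real.exp (φ x)) μ) :
    ∫ x, h x * φ x ∂μ ≤
      entropyFn μ h + (∫ x, h x ∂μ) * Real.log (∫ x, Real.exp (φ x) ∂μ) := by
  have hint : Integrable h μ := .of_integral_ne_zero hpos.ne'
  have : NeZero μ := ⟨by rintro rfl; simp at hpos⟩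
  have hΛ := integral_exp_pos hexp
  rw [entropyFn]
  set Z := ∫ x, h x ∂μ
  set Λ := ∫ x, Real.exp (φ x) ∂μ
  have hyoung (x : X) : h x * φ x + (Real.log Z - Real.log Λ) * h x ≤
      h x * Real.log (h x) - h x + Z / Λ * Real.exp (φ x) := by
    have hx := mul_le_mul_log_sub_add_exp (h0 x) (φ x + (Real.log Z - Real.log Λ))
    rw [Real.exp_add, Real.exp_sub, Real.exp_log hpos, Real.exp_log hΛ] at hx
    linarith
  have hsub : Integrable (fun x ↦ h x * Real.log (h x) - h x) μ := hlog.sub hint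
  have hmono := integral_mono (hφ.add (hint.const_mul _)) (hsub.add (hexp.const_mul _)) hyoung
  simp only [Pi.add_apply] at hmono
  rw [integral_add hφ (hint.const_mul _), integral_add hsub (hexp.const_mul _),
    integral_sub hlog hint, integral_const_mul, integral_const_mul,
    div_mul_cancel₀ _ hΛ.ne'] at hmono
  linarith

lemma entropyFn_add_le_of_mul_eq_zero {g h : X → ℝ} (g0 : ∀ x, 0 ≤ g x) (h0 : ∀ x, 0 ≤ h x)
    (hgh : ∀ x, g x * h x = 0) (hg : Integrable g μ) (hh : Integrable h μ)
    (hglog : Integrable (fun x ↦ g x * Real.log (g x)) μ)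
    (hhlog : Integrable (fun x ↦ h x * Real.log (h x)) μ) :
    entropyFn μ (fun x ↦ g x + h x) ≤ entropyFn μ g + entropyFn μ h := by
  have hsplit (x : X) : (g x + h x) * Real.log (g x + h x) =
      g x * Real.log (g x) + h x * Real.log (h x) := by
    rcases mul_eq_zero.1 (hgh x) with hx | hx <;> simp [hx]
  have hsuper {m n : ℝ} (hm : 0 ≤ m) (hn : 0 ≤ n) :
      m * Real.log m ≤ m * Real.log (m + n) := by
    rcases hm.eq_or_lt with rfl | hm
    · simp
    · gcongr; linarith
  have hm : 0 ≤ ∫ x, g x ∂μ := integral_nonneg g0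
  have hn : 0 ≤ ∫ x, h x ∂μ := integral_nonneg h0
  have hsuper_left := hsuper hm hn
  have hsuper_right := hsuper hn hm
  rw [add_comm (∫ x, h x ∂μ)] at hsuper_right
  simp only [entropyFn, hsplit]
  rw [integral_add hglog hhlog, integral_add hg hh]
  linarith

lemma entropyFn_abs_rpow_le_posPart_add_negPart [IsFiniteMeasure μ] {f : X → ℝ}
    (hf : Measurable f) {M : ℝ} (hM : ∀ x, |f x| ≤ M) {q : ℝ} (hq : 0 < q) :
    entropyFn μ (fun x ↦ |f x| ^ q) ≤
      entropyFn μ (fun x ↦ f⁺ x ^ q) + entropyFn μ (fun x ↦ f⁻ x ^ q) := by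
  have hsplit (x : X) : |f x| ^ q = f⁺ x ^ q + f⁻ x ^ q := by
    rcases le_total 0 (f x) with hx | hx <;> simp [hx, abs_of_nonneg, abs_of_nonpos, hq.ne']
  have hdisj (x : X) : f⁺ x ^ q * f⁻ x ^ q = 0 := by
    rcases le_total 0 (f x) with hx | hx <;> simp [hx, hq.ne']
  have hlog {g : X → ℝ} (hg : Measurable g) (g0 : ∀ x, 0 ≤ g x) (hgf : ∀ x, g x ≤ |f x|) :
      Integrable (fun x ↦ g x ^ q * Real.log (g x ^ q)) μ :=
    integrable_mul_log_of_bounded (hg.pow_const q) (fun x ↦ Real.rpow_nonneg (g0 x) q)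
      fun x ↦ Real.rpow_le_rpow (g0 x) ((hgf x).trans (hM x)) hq.le
  have hpos : Measurable f⁺ := continuous_posPart.measurable.comp hf
  have hneg : Measurable f⁻ := continuous_negPart.measurable.comp hf
  have hpos_log := hlog hpos (fun x ↦ posPart_nonneg _)
    fun x ↦ sup_le (le_abs_self _) (abs_nonneg _)
  have hneg_log := hlog hneg (fun x ↦ negPart_nonneg _)
    fun x ↦ sup_le (neg_le_abs _) (abs_nonneg _)
  have hpos0 (x : X) : 0 ≤ f⁺ x ^ q := Real.rpow_nonneg (posPart_nonneg _) q
  have hneg0 (x : X) : 0 ≤ f⁻ x ^ q := Real.rpow_nonneg (negPart_nonneg _) q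
  simp only [hsplit]
  exact entropyFn_add_le_of_mul_eq_zero hpos0 hneg0 hdisj
    (integrable_of_integrable_mul_log (hpos.pow_const q).aestronglyMeasurable hpos0 hpos_log)
    (integrable_of_integrable_mul_log (hneg.pow_const q).aestronglyMeasurable hneg0 hneg_log)
    hpos_log hneg_log

lemma integral_le_of_tendsto_of_nonneg {ι : Type*} {l : Filter ι} [l.NeBot]
    [l.IsCountablyGenerated] {F : ι → X → ℝ} {F' : X → ℝ} {B : ι → ℝ} {B' : ℝ}
    (hF : ∀ i, Integrable (F i) μ) (F0 : ∀ i x, 0 ≤ F i x)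
    (hlim : ∀ x, Tendsto (F · x) l (𝓝 (F' x))) (hB : Tendsto B l (𝓝 B'))
    (hle : ∀ i, ∫ x, F i x ∂μ ≤ B i) : Integrable F' μ ∧ ∫ x, F' x ∂μ ≤ B' := by
  have hF'm : AEStronglyMeasurable F' μ :=
    aestronglyMeasurable_of_tendsto_ae l (fun i ↦ (hF i).1) (.of_forall hlim)
  have F'0 (x : X) : 0 ≤ F' x := ge_of_tendsto' (hlim x) fun i ↦ F0 i x
  have hB'0 : 0 ≤ B' := ge_of_tendsto' hB fun i ↦ (integral_nonneg (F0 i)).trans (hle i)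
  have hfatou : ∫⁻ x, ENNReal.ofReal (F' x) ∂μ ≤ ENNReal.ofReal B' := calc
    _ = ∫⁻ x, liminf (fun i ↦ ENNReal.ofReal (F i x)) l ∂μ :=
      lintegral_congr fun x ↦ (ENNReal.tendsto_ofReal (hlim x)).liminf_eq.symm
    _ ≤ liminf (fun i ↦ ∫⁻ x, ENNReal.ofReal (F i x) ∂μ) l :=
      lintegral_liminf_le' fun i ↦ (hF i).aemeasurable.ennreal_ofReal
    _ ≤ liminf (fun i ↦ ENNReal.ofReal (B i)) l := by
      refine liminf_le_liminf (.of_forall fun i ↦ ?_)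
      rw [← ofReal_integral_eq_lintegral_ofReal (hF i) (.of_forall (F0 i))]
      exact ENNReal.ofReal_le_ofReal (hle i)
    _ = ENNReal.ofReal B' := (ENNReal.tendsto_ofReal hB).liminf_eq
  have hF' : Integrable F' μ := by
    refine ⟨hF'm, ?_⟩
    rw [hasFiniteIntegral_iff_ofReal (.of_forall F'0)]
    exact hfatou.trans_lt ENNReal.ofReal_lt_top
  refine ⟨hF', ?_⟩
  rwa [← ofReal_integral_eq_lintegral_ofReal hF' (.of_forall F'0),
    ENNReal.ofReal_le_ofReal_iff hB'0] at hfatou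

-- Applying Fatou's lemma to the nonnegative `klFun (h i)` also yields the integrability of
-- `h' * log h'`, without which the entropy of `h'` would be a junk value.
lemma entropyFn_le_of_tendsto [IsProbabilityMeasure μ] {ι : Type*} {l : Filter ι} [l.NeBot]
    [l.IsCountablyGenerated] {h : ι → X → ℝ} {h' G : X → ℝ} {B : ι → ℝ} {B' : ℝ}
    (hm : ∀ i, AEStronglyMeasurable (h i) μ) (h0 : ∀ i x, 0 ≤ h i x) (hG : Integrable G μ)
    (hhG : ∀ i x, h i x ≤ G x) (hlog : ∀ i, Integrable (fun x ↦ h i x * Real.log (h i x)) μ)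
    (hlim : ∀ x, Tendsto (h · x) l (𝓝 (h' x))) (hB : Tendsto B l (𝓝 B'))
    (hle : ∀ i, entropyFn μ (h i) ≤ B i) : entropyFn μ h' ≤ B' := by
  have hψ := InformationTheory.continuous_klFun
  have hnorm (i : ι) (x : X) : ‖h i x‖ ≤ G x := (Real.norm_of_nonneg (h0 i x)).trans_le (hhG i x)
  have hint (i : ι) : Integrable (h i) μ := hG.mono' (hm i) (.of_forall (hnorm i))
  have hint' : Integrable h' μ :=
    hG.mono' (aestronglyMeasurable_of_tendsto_ae l hm (.of_forall hlim))
      (.of_forall fun x ↦ le_of_tendsto' (hlim x).norm fun i ↦ hnorm i x)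
  have hmean : Tendsto (fun i ↦ ∫ x, h i x ∂μ) l (𝓝 (∫ x, h' x ∂μ)) :=
    tendsto_integral_filter_of_dominated_convergence G (.of_forall hm)
      (.of_forall fun i ↦ .of_forall (hnorm i)) hG (.of_forall hlim)
  obtain ⟨hψint', hψle'⟩ := integral_le_of_tendsto_of_nonneg
    (fun i ↦ ((hlog i).add (integrable_const 1)).sub (hint i))
    (fun i x ↦ InformationTheory.klFun_nonneg (h0 i x))
    (fun x ↦ (hψ.tendsto _).comp (hlim x)) (hB.add ((hψ.tendsto _).comp hmean)) fun i ↦ by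
      have := entropyFn_eq_integral_klFun_sub (hint i) (hlog i)
      change ∫ x, InformationTheory.klFun (h i x) ∂μ ≤ _
      dsimp only [Function.comp_apply]
      linarith [hle i]
  have hlog' : Integrable (fun x ↦ h' x * Real.log (h' x)) μ := by
    refine ((hψint'.add hint').sub (integrable_const 1)).congr (.of_forall fun x ↦ ?_)
    simp [InformationTheory.klFun_apply]
  rw [entropyFn_eq_integral_klFun_sub hint' hlog']
  exact sub_le_iff_le_add.2 hψle'

lemma entropyFn_rpow_le_of_forall_min [IsProbabilityMeasure μ] {f : X → ℝ} (hf : Measurable f)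
    (f0 : ∀ x, 0 ≤ f x) {q B : ℝ} (hq : 0 ≤ q) (hB : 0 ≤ B)
    (hle : ∀ n : ℕ, entropyFn μ (fun x ↦ min (f x) n ^ q) ≤ B) :
    entropyFn μ (fun x ↦ f x ^ q) ≤ B := by
  by_cases hint : Integrable (fun x ↦ f x ^ q) μ
  · have hm (n : ℕ) : Measurable fun x ↦ min (f x) n ^ q := (hf.min measurable_const).pow_const q
    have hmin0 (n : ℕ) (x : X) : 0 ≤ min (f x) n := le_min (f0 x) n.cast_nonneg
    refine entropyFn_le_of_tendsto (l := atTop)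
      (fun n ↦ (hm n).aestronglyMeasurable) (fun n x ↦ Real.rpow_nonneg (hmin0 n x) q) hint
      (fun n x ↦ Real.rpow_le_rpow (hmin0 n x) (min_le_left _ _) hq)
      (fun n ↦ integrable_mul_log_of_bounded (hm n) (fun x ↦ Real.rpow_nonneg (hmin0 n x) q)
        (fun x ↦ Real.rpow_le_rpow (hmin0 n x) (min_le_right _ _) hq))
      (fun x ↦ ?_) tendsto_const_nhds hle
    refine tendsto_const_nhds.congr' ?_
    filter_upwards [eventually_ge_atTop ⌈f x⌉₊] with n hn
    rw [min_eq_left (Nat.ceil_le.1 hn)]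
  · rw [entropyFn_eq_zero_of_not_integrable (hf.pow_const q).aestronglyMeasurable
      (fun x ↦ Real.rpow_nonneg (f0 x) q) hint]
    exact hB

lemma entropyFn_rpow_le_of_forall_add_pos [IsProbabilityMeasure μ] {f : X → ℝ} (hf : Measurable f)
    (f0 : ∀ x, 0 ≤ f x) {M : ℝ} (hM : ∀ x, f x ≤ M) {q B : ℝ} (hq : 0 ≤ q)
    (hle : ∀ ε > 0, entropyFn μ (fun x ↦ (f x + ε) ^ q) ≤ B) :
    entropyFn μ (fun x ↦ f x ^ q) ≤ B := by
  let ε (n : ℕ) : ℝ := 1 / (n + 1)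
  have hε (n : ℕ) : 0 < ε n := Nat.one_div_pos_of_nat
  have hε1 (n : ℕ) : ε n ≤ 1 := by
    simpa [ε] using Nat.one_div_le_one_div (α := ℝ) n.zero_le
  have hm (n : ℕ) : Measurable fun x ↦ (f x + ε n) ^ q := (hf.add_const _).pow_const q
  have hfε0 (n : ℕ) (x : X) : 0 ≤ f x + ε n := add_nonneg (f0 x) (hε n).le
  have hfεM (n : ℕ) (x : X) : (f x + ε n) ^ q ≤ (M + 1) ^ q :=
    Real.rpow_le_rpow (hfε0 n x) (add_le_add (hM x) (hε1 n)) hq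
  refine entropyFn_le_of_tendsto (l := atTop)
      (fun n ↦ (hm n).aestronglyMeasurable) (fun n x ↦ Real.rpow_nonneg (hfε0 n x) q)
    (integrable_const _) hfεM
    (fun n ↦ integrable_mul_log_of_bounded (hm n) (fun x ↦ Real.rpow_nonneg (hfε0 n x) q) (hfεM n))
    (fun x ↦ ?_) tendsto_const_nhds fun n ↦ hle _ (hε n)
  have hlim : Tendsto (fun n ↦ f x + ε n) atTop (𝓝 (f x)) := by
    simpa [ε] using (tendsto_one_div_add_atTop_nhds_zero_nat (𝕜 := ℝ)).const_add (f x)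
  exact hlim.rpow_const (.inr hq)

end Entropy

section MetricSubgradient

variable {X : Type*} [MetricSpace X] {f g : X → ℝ} {L : ℝ≥0} {x : X}

lemma sub_le_mul_dist_of_lipschitzWith (hf : LipschitzWith L f) (x y : X) :
    f x - f y ≤ L * dist x y :=
  (le_abs_self _).trans (Real.dist_eq (f x) (f y) ▸ hf.dist_le_mul x y)

lemma isBoundedUnder_slope_of_lipschitzWith (hf : LipschitzWith L f) (x : X) (l : Filter X) :
    IsBoundedUnder (· ≤ ·) l fun y ↦ max (f x - f y) 0 / dist y x := by
  refine isBoundedUnder_of ⟨L, fun y ↦ div_le_of_le_mul₀ dist_nonneg L.coe_nonneg ?_⟩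
  rw [dist_comm]
  exact max_le (sub_le_mul_dist_of_lipschitzWith hf x y) (by positivity)

-- On the trivial filter the real `limsup` is the junk value `sInf univ = 0`.
lemma metricSubgradient_eq_zero_of_nhdsNE_eq_bot (f : X → ℝ) (hx : 𝓝[≠] x = ⊥) :
    metricSubgradient f x = 0 := by
  simp [metricSubgradient, hx, limsup, limsSup]

lemma metricSubgradient_nonneg (hf : LipschitzWith L f) (x : X) : 0 ≤ metricSubgradient f x := by
  rcases eq_or_neBot (𝓝[≠] x) with hx | hx
  · rw [metricSubgradient_eq_zero_of_nhdsNE_eq_bot f hx]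
  · exact le_limsup_of_frequently_le (.of_forall fun y ↦ by positivity)
      (isBoundedUnder_slope_of_lipschitzWith hf x _)

lemma metricSubgradient_le_of_eventually {k : ℝ} (hk : 0 ≤ k)
    (h : ∀ᶠ y in 𝓝 x, f x - f y ≤ k * dist x y) : metricSubgradient f x ≤ k := by
  rcases eq_or_neBot (𝓝[≠] x) with hx | hx
  · rwa [metricSubgradient_eq_zero_of_nhdsNE_eq_bot f hx]
  · have hcobdd : IsCoboundedUnder (· ≤ ·) (𝓝[≠] x) fun y ↦ max (f x - f y) 0 / dist y x :=
      (isBoundedUnder_of ⟨0, fun y ↦ by positivity⟩).isCoboundedUnder_le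
    refine limsup_le_of_le hcobdd ?_
    filter_upwards [h.filter_mono nhdsWithin_le_nhds] with y hy
    refine div_le_of_le_mul₀ dist_nonneg hk ?_
    rw [dist_comm]
    exact max_le hy (by positivity)

lemma eventually_max_sub_le_of_metricSubgradient_lt (hf : LipschitzWith L f) {k : ℝ}
    (hk : metricSubgradient f x < k) : ∀ᶠ y in 𝓝 x, max (f x - f y) 0 ≤ k * dist x y := by
  have hlt := eventually_lt_of_limsup_lt hk (isBoundedUnder_slope_of_lipschitzWith hf x _)
  filter_upwards [eventually_nhdsWithin_iff.1 hlt] with y hy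
  rcases eq_or_ne y x with rfl | hyx
  · simp
  · rw [dist_comm]
    exact ((div_lt_iff₀ (dist_pos.2 hyx)).1 (hy hyx)).le

lemma metricSubgradient_le_of_lipschitzWith (hf : LipschitzWith L f) (x : X) :
    metricSubgradient f x ≤ L :=
  metricSubgradient_le_of_eventually L.coe_nonneg
    (.of_forall (sub_le_mul_dist_of_lipschitzWith hf x))

lemma metricSubgradient_add_const (f : X → ℝ) (c : ℝ) :
    metricSubgradient (fun y ↦ f y + c) = metricSubgradient f := by
  simp only [metricSubgradient, add_sub_add_right_eq_sub, funext_iff, implies_true]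

lemma metricSubgradient_le_mul (hf : LipschitzWith L f) {c : ℝ} (hc : 0 ≤ c)
    (h : ∀ c' > c, ∀ᶠ y in 𝓝 x, g x - g y ≤ c' * max (f x - f y) 0) :
    metricSubgradient g x ≤ c * metricSubgradient f x := by
  have hlim : Tendsto (fun δ : ℝ ↦ (c + δ) * (metricSubgradient f x + δ)) (𝓝[>] 0)
      (𝓝 (c * metricSubgradient f x)) := by
    have hcont : Continuous fun δ : ℝ ↦ (c + δ) * (metricSubgradient f x + δ) := by fun_prop
    simpa using (hcont.tendsto 0).mono_left nhdsWithin_le_nhds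
  refine ge_of_tendsto hlim ?_
  filter_upwards [self_mem_nhdsWithin] with δ (hδ : 0 < δ)
  have hf0 := metricSubgradient_nonneg hf x
  refine metricSubgradient_le_of_eventually (by positivity) ?_
  filter_upwards [h (c + δ) (by linarith),
    eventually_max_sub_le_of_metricSubgradient_lt hf (lt_add_of_pos_right _ hδ)] with y hgy hfy
  calc g x - g y ≤ (c + δ) * max (f x - f y) 0 := hgy
    _ ≤ (c + δ) * ((metricSubgradient f x + δ) * dist x y) := by gcongr
    _ = _ := (mul_assoc _ _ _).symm

lemma metricSubgradient_comp_le_of_monotone (hf : LipschitzWith L f) {φ : ℝ → ℝ} (hφ : Monotone φ)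
    (hφ1 : LipschitzWith 1 φ) (x : X) :
    metricSubgradient (fun y ↦ φ (f y)) x ≤ metricSubgradient f x := by
  have hle (y : X) : φ (f x) - φ (f y) ≤ max (f x - f y) 0 := by
    rcases le_total (f x) (f y) with hxy | hxy
    · exact le_max_of_le_right (sub_nonpos.2 (hφ hxy))
    · have hlip := sub_le_mul_dist_of_lipschitzWith hφ1 (f x) (f y)
      rw [NNReal.coe_one, one_mul, Real.dist_eq, abs_of_nonneg (sub_nonneg.2 hxy)] at hlip
      exact le_max_of_le_left hlip
  rw [← one_mul (metricSubgradient f x)]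
  exact metricSubgradient_le_mul hf zero_le_one fun c' hc' ↦ .of_forall fun y ↦
    (hle y).trans (le_mul_of_one_le_left (le_max_right _ _) hc'.le)

lemma metricSubgradient_comp_le_of_hasDerivAt (hf : LipschitzWith L f) {φ : ℝ → ℝ} {c : ℝ}
    (hφ : HasDerivAt φ c (f x)) (hc : 0 < c) :
    metricSubgradient (fun y ↦ φ (f y)) x ≤ c * metricSubgradient f x := by
  refine metricSubgradient_le_mul hf hc.le fun c' hc' ↦ ?_
  have hδ : 0 < min (c' - c) c := lt_min (sub_pos.2 hc') hc
  have hexpand := (hasDerivAt_iff_isLittleO.1 hφ).bound hδ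
  filter_upwards [hf.continuous.continuousAt.eventually hexpand] with y hy
  rw [Real.norm_eq_abs, Real.norm_eq_abs, smul_eq_mul] at hy
  have hlow := (abs_le.1 hy).1
  rcases le_total (f x) (f y) with hxy | hxy
  · rw [max_eq_right (by linarith)]
    rw [abs_of_nonneg (by linarith)] at hlow
    nlinarith [min_le_right (c' - c) c]
  · rw [max_eq_left (by linarith)]
    rw [abs_of_nonpos (by linarith)] at hlow
    nlinarith [min_le_left (c' - c) c]

lemma metricSubgradient_units_smul_comp_le_of_hasDerivAt (σ : ℤˣ) (hf : LipschitzWith L f)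
    {φ : ℝ → ℝ} {c : ℝ} (hφ : HasDerivAt φ c (f x)) (hc : 0 < c) :
    metricSubgradient (σ • fun y ↦ φ (f y)) x ≤ c * metricSubgradient (σ • f) x := by
  rcases Int.units_eq_one_or σ with rfl | rfl
  · simpa only [one_smul] using metricSubgradient_comp_le_of_hasDerivAt hf hφ hc
  · have hψ : HasDerivAt (fun r ↦ -φ (-r)) c ((-f) x) := by
      have hφ' : HasDerivAt φ c (-(-f) x) := by simpa using hφ
      simpa [Function.comp_def] using (hφ'.comp ((-f) x) (hasDerivAt_neg ((-f) x))).fun_neg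
    simpa [Units.neg_smul, Pi.neg_def] using
      metricSubgradient_comp_le_of_hasDerivAt hf.neg hψ hc

lemma lipschitzWith_units_smul (σ : ℤˣ) (hf : LipschitzWith L f) : LipschitzWith L (σ • f) := by
  rcases Int.units_eq_one_or σ with rfl | rfl
  · simpa only [one_smul] using hf
  · simpa only [Units.neg_smul, one_smul] using hf.neg

lemma lipschitzWith_posPart_comp (hf : LipschitzWith L f) : LipschitzWith L f⁺ :=
  one_mul L ▸ lipschitzWith_posPart.comp hf

lemma lipschitzWith_negPart_comp (hf : LipschitzWith L f) : LipschitzWith L f⁻ :=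
  one_mul L ▸ lipschitzWith_negPart.comp hf

lemma metricSubgradient_posPart_rpow_add_le (hf : LipschitzWith L f) {q : ℝ} (hq : 0 < q) (x : X) :
    metricSubgradient f⁺ x ^ q + metricSubgradient (-f⁻) x ^ q ≤ metricSubgradient f x ^ q := by
  have hpos0 := metricSubgradient_nonneg (lipschitzWith_posPart_comp hf) x
  have hneg0 := metricSubgradient_nonneg (lipschitzWith_negPart_comp hf).neg x
  rcases le_or_gt (f x) 0 with hx | hx
  · have hpos : metricSubgradient f⁺ x = 0 := by
      refine le_antisymm (metricSubgradient_le_of_eventually le_rfl (.of_forall fun y ↦ ?_)) hpos0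
      simp [hx]
    rw [hpos, Real.zero_rpow hq.ne', zero_add]
    exact Real.rpow_le_rpow hneg0 (metricSubgradient_comp_le_of_monotone hf
      negPart_anti.neg lipschitzWith_negPart.neg x) hq.le
  · have hneg : metricSubgradient (-f⁻) x = 0 := by
      refine le_antisymm (metricSubgradient_le_of_eventually le_rfl ?_) hneg0
      filter_upwards [hf.continuous.continuousAt.eventually (lt_mem_nhds hx)] with y hy
      simp [hx.le, hy.le]
    rw [hneg, Real.zero_rpow hq.ne', add_zero]
    exact Real.rpow_le_rpow hpos0 (metricSubgradient_comp_le_of_monotone hf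
      posPart_mono lipschitzWith_posPart x) hq.le

lemma metricSubgradient_lt_iff (hf : LipschitzWith L f) {c : ℝ} :
    metricSubgradient f x < c ↔ ∃ k : ℚ, 0 ≤ (k : ℝ) ∧ (k : ℝ) < c ∧ ∃ n : ℕ,
      ∀ y, dist y x < 1 / ((n : ℝ) + 1) → f x - f y ≤ k * dist x y := by
  constructor
  · intro h
    obtain ⟨k, hfk, hkc⟩ := exists_rat_btwn h
    obtain ⟨δ, hδ, hball⟩ :=
      Metric.eventually_nhds_iff.1 (eventually_max_sub_le_of_metricSubgradient_lt hf hfk)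
    obtain ⟨n, hn⟩ := exists_nat_one_div_lt hδ
    exact ⟨k, (metricSubgradient_nonneg hf x).trans hfk.le, hkc, n,
      fun y hy ↦ (le_max_left _ _).trans (hball (hy.trans hn))⟩
  · rintro ⟨k, hk0, hkc, n, hn⟩
    exact (metricSubgradient_le_of_eventually hk0 (Metric.eventually_nhds_iff.2
      ⟨_, Nat.one_div_pos_of_nat, fun {y} hy ↦ hn y hy⟩)).trans_lt hkc

lemma measurable_metricSubgradient [MeasurableSpace X] [OpensMeasurableSpace X]
    (hf : LipschitzWith L f) : Measurable (metricSubgradient f) := by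
  have hcont := hf.continuous
  have hclosed (k r : ℝ) : IsClosed {x | ∀ y, dist y x < r → f x - f y ≤ k * dist x y} := by
    simp only [Set.ofPred_forall, imp_iff_not_or, not_lt, Set.ofPred_or]
    exact isClosed_iInter fun y ↦ (isClosed_le (by fun_prop) (by fun_prop)).union
      (isClosed_le (by fun_prop) (by fun_prop))
  refine measurable_of_Iio fun c ↦ ?_
  have hpre : metricSubgradient f ⁻¹' Set.Iio c = ⋃ (k : ℚ) (_ : 0 ≤ (k : ℝ) ∧ (k : ℝ) < c)
      (n : ℕ), {x | ∀ y, dist y x < 1 / ((n : ℝ) + 1) → f x - f y ≤ k * dist x y} := by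
    ext x
    simp only [Set.mem_preimage, Set.mem_Iio, metricSubgradient_lt_iff hf, Set.mem_iUnion,
      exists_prop, Set.mem_ofPred_eq, and_assoc]
  rw [hpre]
  exact .iUnion fun k ↦ .iUnion fun _ ↦ .iUnion fun n ↦ (hclosed _ _).measurableSet

lemma integrable_metricSubgradient_rpow [MeasurableSpace X] [OpensMeasurableSpace X]
    {μ : Measure X} [IsFiniteMeasure μ] (hf : LipschitzWith L f) {q : ℝ} (hq : 0 ≤ q) :
    Integrable (fun x ↦ metricSubgradient f x ^ q) μ := by
  refine Integrable.of_bound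
    ((measurable_metricSubgradient hf).pow_const q).aestronglyMeasurable ((L : ℝ) ^ q)
    (.of_forall fun x ↦ ?_)
  have h0 := metricSubgradient_nonneg hf x
  rw [Real.norm_of_nonneg (by positivity)]
  exact Real.rpow_le_rpow h0 (metricSubgradient_le_of_lipschitzWith hf x) hq

end MetricSubgradient

section HopfLax

variable {X : Type*} [MetricSpace X] {p q t : ℝ} {f : X → ℝ}

lemma bddBelow_range_rpow_dist_add (hp : 0 < p) (ht : 0 < t) {m : ℝ} (hm : ∀ y, m ≤ f y) (x : X) :
    BddBelow (Set.range fun y ↦ dist x y ^ p / (p * t ^ (p - 1)) + f y) :=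
  ⟨m, Set.forall_mem_range.2 fun y ↦ le_add_of_nonneg_of_le (by positivity) (hm y)⟩

lemma hopfLaxP_le (hp : 0 < p) (ht : 0 < t) {m : ℝ} (hm : ∀ y, m ≤ f y) (x y : X) :
    hopfLaxP p f t x ≤ dist x y ^ p / (p * t ^ (p - 1)) + f y := by
  rw [hopfLaxP, if_neg ht.ne']
  exact ciInf_le (bddBelow_range_rpow_dist_add hp ht hm x) y

lemma hopfLaxP_le_self (hp : 0 < p) (ht : 0 < t) {m : ℝ} (hm : ∀ y, m ≤ f y) (x : X) :
    hopfLaxP p f t x ≤ f x := by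
  simpa [Real.zero_rpow hp.ne'] using hopfLaxP_le hp ht hm x x

lemma le_hopfLaxP (ht : t ≠ 0) {x : X} {c : ℝ}
    (h : ∀ y, c ≤ dist x y ^ p / (p * t ^ (p - 1)) + f y) : c ≤ hopfLaxP p f t x := by
  have : Nonempty X := ⟨x⟩
  rw [hopfLaxP, if_neg ht]
  exact le_ciInf h

lemma abs_hopfLaxP_le (hp : 0 < p) (ht : 0 < t) {M : ℝ} (hM : ∀ y, |f y| ≤ M) (x : X) :
    |hopfLaxP p f t x| ≤ M := by
  have hlow (y : X) : -M ≤ f y := neg_le_of_abs_le (hM y)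
  exact abs_le.2 ⟨le_hopfLaxP ht.ne' fun y ↦ le_add_of_nonneg_of_le (by positivity) (hlow y),
    (hopfLaxP_le_self hp ht hlow x).trans (le_of_abs_le (hM x))⟩

lemma measurable_hopfLaxP [MeasurableSpace X] [OpensMeasurableSpace X] (hp : 0 < p) (ht : 0 < t)
    {m : ℝ} (hm : ∀ y, m ≤ f y) : Measurable (hopfLaxP p f t) := by
  have hcost (y : X) : Continuous fun x ↦ dist x y ^ p / (p * t ^ (p - 1)) + f y := by
    have : Continuous fun x ↦ dist x y ^ p :=
      (continuous_id.dist continuous_const).rpow_const fun _ ↦ .inr hp.le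
    fun_prop
  have husc : UpperSemicontinuous fun x ↦ ⨅ y, (dist x y ^ p / (p * t ^ (p - 1)) + f y) :=
    upperSemicontinuous_ciInf (bddBelow_range_rpow_dist_add hp ht hm)
      fun y ↦ (hcost y).upperSemicontinuous
  convert husc.measurable with x
  exact if_neg ht.ne'

lemma le_hopfLaxP_neg_hopfLaxP_neg (hp : 0 < p) (ht : 0 < t) {M : ℝ} (hM : ∀ y, f y ≤ M)
    (x : X) : f x ≤ hopfLaxP p (-hopfLaxP p (-f) t) t x := by
  have hlow (y : X) : -M ≤ (-f) y := neg_le_neg (hM y)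
  refine le_hopfLaxP ht.ne' fun y ↦ ?_
  have hle := hopfLaxP_le hp ht hlow y x
  rw [dist_comm y x, Pi.neg_apply] at hle
  rw [Pi.neg_apply]
  linarith

lemma mul_le_rpow_div_add_mul_rpow_div (hpq : p.HolderConjugate q) {k d : ℝ} (hd : 0 ≤ d)
    (hk : 0 ≤ k) (ht : 0 < t) : k * d ≤ d ^ p / (p * t ^ (p - 1)) + t * (k ^ q / q) := by
  have htp : t ^ p ≠ 0 := (Real.rpow_pos_of_pos ht p).ne'
  have hyoung := mul_le_mul_of_nonneg_left
    (Real.young_inequality_of_nonneg (div_nonneg hd ht.le) hk hpq) ht.le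
  calc k * d = t * (d / t * k) := by field_simp
    _ ≤ t * ((d / t) ^ p / p + k ^ q / q) := hyoung
    _ = d ^ p / (p * t ^ (p - 1)) + t * (k ^ q / q) := by
      rw [Real.div_rpow hd ht.le, Real.rpow_sub_one ht.ne']
      field_simp

/-- The difference quotient `(f - Q_t f) / t` in time of the Hopf–Lax semigroup. -/
noncomputable def hopfLaxRate (p : ℝ) (f : X → ℝ) (t : ℝ) (x : X) : ℝ :=
  (f x - hopfLaxP p f t x) / t

lemma hopfLaxRate_nonneg (hp : 0 < p) (ht : 0 < t) {m : ℝ} (hm : ∀ y, m ≤ f y) (x : X) :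
    0 ≤ hopfLaxRate p f t x :=
  div_nonneg (sub_nonneg.2 (hopfLaxP_le_self hp ht hm x)) ht.le

lemma measurable_hopfLaxRate [MeasurableSpace X] [OpensMeasurableSpace X] (hp : 0 < p)
    (ht : 0 < t) {m : ℝ} (hm : ∀ y, m ≤ f y) (hf : Measurable f) :
    Measurable (hopfLaxRate p f t) :=
  (hf.sub (measurable_hopfLaxP hp ht hm)).div_const t

lemma hopfLaxRate_le_of_forall (ht : 0 < t) {x : X} {c : ℝ}
    (h : ∀ y, f x - f y ≤ dist x y ^ p / (p * t ^ (p - 1)) + t * c) : hopfLaxRate p f t x ≤ c := by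
  have hle : f x - t * c ≤ hopfLaxP p f t x := le_hopfLaxP ht.ne' fun y ↦ by linarith [h y]
  rw [hopfLaxRate, div_le_iff₀ ht]
  linarith

lemma hopfLaxRate_le_of_lipschitzWith (hpq : p.HolderConjugate q) (ht : 0 < t) {L : ℝ≥0}
    (hf : LipschitzWith L f) (x : X) : hopfLaxRate p f t x ≤ L ^ q / q :=
  hopfLaxRate_le_of_forall ht fun y ↦ (sub_le_mul_dist_of_lipschitzWith hf x y).trans
    (mul_le_rpow_div_add_mul_rpow_div hpq dist_nonneg L.coe_nonneg ht)

lemma tendsto_hopfLaxP (hpq : p.HolderConjugate q) {L : ℝ≥0} (hf : LipschitzWith L f) {m : ℝ}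
    (hm : ∀ y, m ≤ f y) (x : X) : Tendsto (hopfLaxP p f · x) (𝓝[>] 0) (𝓝 (f x)) := by
  have hlower : Tendsto (fun t : ℝ ↦ f x - L ^ q / q * t) (𝓝[>] 0) (𝓝 (f x)) := by
    have hcont : Continuous fun t : ℝ ↦ f x - L ^ q / q * t := by fun_prop
    simpa using (hcont.tendsto 0).mono_left nhdsWithin_le_nhds
  refine tendsto_of_tendsto_of_tendsto_of_le_of_le' hlower tendsto_const_nhds ?_ ?_
  · filter_upwards [self_mem_nhdsWithin] with t (ht : 0 < t)
    have hrate := hopfLaxRate_le_of_lipschitzWith hpq ht hf x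
    rw [hopfLaxRate, div_le_iff₀ ht] at hrate
    linarith
  · filter_upwards [self_mem_nhdsWithin] with t ht
    exact hopfLaxP_le_self hpq.pos ht hm x

-- For small `t`, the cost `dist x y ^ p / (p * t ^ (p - 1))` beats the Lipschitz bound on
-- `f x - f y` away from `x`, so only the behaviour of `f` near `x` matters.
lemma eventually_hopfLaxRate_le (hpq : p.HolderConjugate q) {L : ℝ≥0} (hf : LipschitzWith L f)
    {x : X} {k : ℝ} (hk : 0 ≤ k) (hloc : ∀ᶠ y in 𝓝 x, f x - f y ≤ k * dist x y) :
    ∀ᶠ t in 𝓝[>] 0, hopfLaxRate p f t x ≤ k ^ q / q := by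
  have hp : 0 < p := hpq.pos
  have hp1 : 0 < p - 1 := hpq.sub_one_pos
  obtain ⟨δ, hδ, hball⟩ := Metric.eventually_nhds_iff.1 hloc
  have hlim : Tendsto (fun t : ℝ ↦ L * (p * t ^ (p - 1))) (𝓝[>] 0) (𝓝 0) := by
    have hcont : Continuous fun t : ℝ ↦ L * (p * t ^ (p - 1)) := by
      have := Real.continuous_rpow_const hp1.le
      fun_prop
    simpa [Real.zero_rpow hp1.ne'] using (hcont.tendsto 0).mono_left nhdsWithin_le_nhds
  filter_upwards [hlim.eventually (gt_mem_nhds (Real.rpow_pos_of_pos hδ (p - 1))),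
    self_mem_nhdsWithin] with t htδ (ht : 0 < t)
  refine hopfLaxRate_le_of_forall ht fun y ↦ ?_
  rcases lt_or_ge (dist y x) δ with hy | hy
  · exact (hball hy).trans (mul_le_rpow_div_add_mul_rpow_div hpq dist_nonneg hk ht)
  · rw [dist_comm] at hy
    have hfar : L * dist x y ≤ dist x y ^ p / (p * t ^ (p - 1)) := by
      rw [le_div_iff₀ (by positivity)]
      calc L * dist x y * (p * t ^ (p - 1)) = L * (p * t ^ (p - 1)) * dist x y := by ring
        _ ≤ dist x y ^ (p - 1) * dist x y := by
          gcongr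
          exact htδ.le.trans (Real.rpow_le_rpow hδ.le hy hp1.le)
        _ = dist x y ^ p := by
          rw [Real.rpow_sub_one (hδ.trans_le hy).ne', div_mul_cancel₀ _ (hδ.trans_le hy).ne']
    have hq : 0 < q := hpq.symm.pos
    exact le_add_of_le_of_nonneg ((sub_le_mul_dist_of_lipschitzWith hf x y).trans hfar)
      (by positivity)

-- The rate need not converge, it is only asymptotically bounded by `|∇⁻ f| ^ q / q`; taking the
-- maximum of the two gives a genuine limit.
lemma tendsto_max_hopfLaxRate (hpq : p.HolderConjugate q) {L : ℝ≥0} (hf : LipschitzWith L f)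
    (x : X) :
    Tendsto (fun t ↦ max (hopfLaxRate p f t x) (metricSubgradient f x ^ q / q)) (𝓝[>] 0)
      (𝓝 (metricSubgradient f x ^ q / q)) := by
  have hf0 := metricSubgradient_nonneg hf x
  have hq : 0 < q := hpq.symm.pos
  refine tendsto_order.2 ⟨fun c hc ↦ .of_forall fun t ↦ lt_max_of_lt_right hc, fun c hc ↦ ?_⟩
  have hcont : ContinuousAt (fun k : ℝ ↦ k ^ q / q) (metricSubgradient f x) :=
    (Real.continuousAt_rpow_const _ _ (.inr hq.le)).div_const q
  obtain ⟨k, hfk, hkc⟩ := (hcont.eventually (gt_mem_nhds hc)).exists_gt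
  have hloc := (eventually_max_sub_le_of_metricSubgradient_lt hf hfk).mono
    fun y hy ↦ (le_max_left _ _).trans hy
  filter_upwards [eventually_hopfLaxRate_le hpq hf (hf0.trans hfk.le) hloc] with t ht
  exact max_lt (ht.trans_lt hkc) hc

lemma norm_max_hopfLaxRate_le (hpq : p.HolderConjugate q) (ht : 0 < t) {L : ℝ≥0}
    (hf : LipschitzWith L f) (x : X) :
    ‖max (hopfLaxRate p f t x) (metricSubgradient f x ^ q / q)‖ ≤ L ^ q / q := by
  have hq : 0 < q := hpq.symm.pos
  have hf0 := metricSubgradient_nonneg hf x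
  rw [Real.norm_of_nonneg (le_max_of_le_right (by positivity))]
  refine max_le (hopfLaxRate_le_of_lipschitzWith hpq ht hf x) ?_
  gcongr
  exact metricSubgradient_le_of_lipschitzWith hf x

section Integral

variable [MeasurableSpace X] [OpensMeasurableSpace X] {μ : Measure X} {L : ℝ≥0} {m : ℝ}

lemma integrable_mul_hopfLaxRate (hpq : p.HolderConjugate q) (ht : 0 < t)
    (hf : LipschitzWith L f) (hm : ∀ y, m ≤ f y) {w : X → ℝ} (hw : Integrable w μ) :
    Integrable (fun x ↦ w x * hopfLaxRate p f t x) μ := by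
  refine hw.mul_bdd (c := L ^ q / q) (measurable_hopfLaxRate hpq.pos ht hm
    hf.continuous.measurable).aestronglyMeasurable (.of_forall fun x ↦ ?_)
  rw [Real.norm_of_nonneg (hopfLaxRate_nonneg hpq.pos ht hm x)]
  exact hopfLaxRate_le_of_lipschitzWith hpq ht hf x

lemma aestronglyMeasurable_max_hopfLaxRate (hp : 0 < p) (ht : 0 < t) (hf : LipschitzWith L f)
    (hm : ∀ y, m ≤ f y) : AEStronglyMeasurable
      (fun x ↦ max (hopfLaxRate p f t x) (metricSubgradient f x ^ q / q)) μ :=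
  ((measurable_hopfLaxRate hp ht hm hf.continuous.measurable).max
    (((measurable_metricSubgradient hf).pow_const q).div_const q)).aestronglyMeasurable

lemma integral_mul_hopfLaxRate_le (hpq : p.HolderConjugate q) (ht : 0 < t)
    (hf : LipschitzWith L f) (hm : ∀ y, m ≤ f y) {w : X → ℝ} (w0 : ∀ x, 0 ≤ w x)
    (hw : Integrable w μ) : ∫ x, w x * hopfLaxRate p f t x ∂μ ≤
      ∫ x, w x * max (hopfLaxRate p f t x) (metricSubgradient f x ^ q / q) ∂μ :=
  integral_mono (integrable_mul_hopfLaxRate hpq ht hf hm hw)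
    (hw.mul_bdd (aestronglyMeasurable_max_hopfLaxRate hpq.pos ht hf hm)
      (.of_forall (norm_max_hopfLaxRate_le hpq ht hf)))
    fun x ↦ mul_le_mul_of_nonneg_left (le_max_left _ _) (w0 x)

lemma tendsto_integral_mul_max_hopfLaxRate [IsFiniteMeasure μ] (hpq : p.HolderConjugate q)
    (hf : LipschitzWith L f) (hm : ∀ y, m ≤ f y) {t : ℕ → ℝ} (ht0 : ∀ n, 0 < t n)
    (ht : Tendsto t atTop (𝓝[>] 0)) {w : ℕ → X → ℝ} {w' : X → ℝ} {W : ℝ}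
    (hw : ∀ n, Measurable (w n)) (hW : ∀ n x, ‖w n x‖ ≤ W)
    (hlim : ∀ x, Tendsto (w · x) atTop (𝓝 (w' x))) :
    Tendsto (fun n ↦ ∫ x, w n x * max (hopfLaxRate p f (t n) x)
        (metricSubgradient f x ^ q / q) ∂μ) atTop
      (𝓝 (∫ x, w' x * (metricSubgradient f x ^ q / q) ∂μ)) := by
  refine tendsto_integral_of_dominated_convergence (fun _ ↦ W * (L ^ q / q))
    (fun n ↦ (hw n).aestronglyMeasurable.mul
      (aestronglyMeasurable_max_hopfLaxRate hpq.pos (ht0 n) hf hm))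
    (integrable_const _) (fun n ↦ .of_forall fun x ↦ ?_)
    (.of_forall fun x ↦ (hlim x).mul ((tendsto_max_hopfLaxRate hpq hf x).comp ht))
  exact norm_mul_le_of_le (hW n x) (norm_max_hopfLaxRate_le hpq (ht0 n) hf x)

end Integral

end HopfLax

section Truncation

variable {X : Type*} [MetricSpace X] [MeasurableSpace X] [OpensMeasurableSpace X]
  {μ : Measure X} [IsProbabilityMeasure μ] {f : X → ℝ} {L : ℝ≥0} {q C M : ℝ}

lemma entropyFn_rpow_le_of_forall_pos (hq : 0 ≤ q) (σ : ℤˣ) (hf : LipschitzWith L f)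
    (f0 : ∀ x, 0 ≤ f x) (fM : ∀ x, f x ≤ M)
    (H : ∀ g : X → ℝ, (∃ L, LipschitzWith L g) → (∃ ε > 0, ∀ x, ε ≤ g x) → (∃ M, ∀ x, g x ≤ M) →
      entropyFn μ (fun x ↦ g x ^ q) ≤ C * ∫ x, metricSubgradient (σ • g) x ^ q ∂μ) :
    entropyFn μ (fun x ↦ f x ^ q) ≤ C * ∫ x, metricSubgradient (σ • f) x ^ q ∂μ := by
  refine entropyFn_rpow_le_of_forall_add_pos hf.continuous.measurable f0 fM hq fun ε hε ↦ ?_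
  have hsub : metricSubgradient (σ • fun x ↦ f x + ε) = metricSubgradient (σ • f) := by
    rw [← metricSubgradient_add_const (σ • f) (σ • ε)]
    congr 1
    ext x
    exact smul_add σ (f x) ε
  rw [← hsub]
  exact H _ ⟨L, by simpa using hf.add (LipschitzWith.const ε)⟩
    ⟨ε, hε, fun x ↦ le_add_of_nonneg_left (f0 x)⟩ ⟨M + ε, fun x ↦ by linarith [fM x]⟩

-- As `|∇⁻ f⁺|` vanishes where `f ≤ 0` and `|∇⁻ (-f⁻)|` where `0 < f`, it is enough to control the
-- entropy of `(f⁺) ^ q` by `|∇⁻ f⁺|` and that of `(f⁻) ^ q` by `|∇⁻ (-f⁻)|`.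
lemma entropyFn_abs_rpow_le_of_forall_nonneg (hq : 0 < q) (hC : 0 ≤ C) (hf : LipschitzWith L f)
    (hM : ∀ x, |f x| ≤ M)
    (H : ∀ (σ : ℤˣ) (g : X → ℝ), (∃ L, LipschitzWith L g) → (∀ x, 0 ≤ g x) →
      (∃ M, ∀ x, g x ≤ M) →
      entropyFn μ (fun x ↦ g x ^ q) ≤ C * ∫ x, metricSubgradient (σ • g) x ^ q ∂μ) :
    entropyFn μ (fun x ↦ |f x| ^ q) ≤ C * ∫ x, metricSubgradient f x ^ q ∂μ := by
  have hpos := lipschitzWith_posPart_comp hf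
  have hneg := lipschitzWith_negPart_comp hf
  have hEpos := H 1 f⁺ ⟨L, hpos⟩ (fun x ↦ posPart_nonneg _)
    ⟨M, fun x ↦ (sup_le (le_abs_self _) (abs_nonneg _)).trans (hM x)⟩
  have hEneg := H (-1) f⁻ ⟨L, hneg⟩ (fun x ↦ negPart_nonneg _)
    ⟨M, fun x ↦ (sup_le (neg_le_abs (f x)) (abs_nonneg _)).trans (hM x)⟩
  simp only [Units.neg_smul, one_smul] at hEpos hEneg
  have hpos_int := integrable_metricSubgradient_rpow (μ := μ) hpos hq.le
  have hneg_int := integrable_metricSubgradient_rpow (μ := μ) hneg.neg hq.le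
  calc entropyFn μ (fun x ↦ |f x| ^ q)
      ≤ entropyFn μ (fun x ↦ f⁺ x ^ q) + entropyFn μ (fun x ↦ f⁻ x ^ q) :=
        entropyFn_abs_rpow_le_posPart_add_negPart hf.continuous.measurable hM hq
    _ ≤ C * ∫ x, (metricSubgradient f⁺ x ^ q + metricSubgradient (-f⁻) x ^ q) ∂μ := by
        rw [integral_add hpos_int hneg_int, mul_add]
        exact add_le_add hEpos hEneg
    _ ≤ C * ∫ x, metricSubgradient f x ^ q ∂μ :=
        mul_le_mul_of_nonneg_left (integral_mono (hpos_int.add hneg_int)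
          (integrable_metricSubgradient_rpow hf hq.le)
          (metricSubgradient_posPart_rpow_add_le hf hq)) hC

lemma entropyFn_abs_rpow_le_of_forall_bounded (hq : 0 ≤ q) (hC : 0 ≤ C) (hf : LipschitzWith L f)
    (H : ∀ g : X → ℝ, (∃ L, LipschitzWith L g) → (∃ M, ∀ x, |g x| ≤ M) →
      entropyFn μ (fun x ↦ |g x| ^ q) ≤ C * ∫ x, metricSubgradient g x ^ q ∂μ) :
    entropyFn μ (fun x ↦ |f x| ^ q) ≤ C * ∫ x, metricSubgradient f x ^ q ∂μ := by
  have hnonneg : 0 ≤ C * ∫ x, metricSubgradient f x ^ q ∂μ :=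
    mul_nonneg hC (integral_nonneg fun x ↦ Real.rpow_nonneg (metricSubgradient_nonneg hf x) q)
  refine entropyFn_rpow_le_of_forall_min hf.continuous.abs.measurable (fun x ↦ abs_nonneg _) hq
    hnonneg fun n ↦ ?_
  let φ (r : ℝ) : ℝ := max (-n) (min r n)
  have hφ : LipschitzWith 1 φ := (LipschitzWith.id.min_const (n : ℝ)).const_max (-n)
  have hφmono : Monotone φ := fun r s hrs ↦ max_le_max_left _ (min_le_min_right _ hrs)
  have hn : (0 : ℝ) ≤ n := n.cast_nonneg
  have habs (r : ℝ) : |φ r| = min |r| n := by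
    rcases le_total 0 r with hr | hr
    · rw [abs_of_nonneg hr, abs_of_nonneg] <;> grind
    · rw [abs_of_nonpos hr, abs_of_nonpos] <;> grind
  have hφf : LipschitzWith L fun x ↦ φ (f x) := one_mul L ▸ hφ.comp hf
  have hφf_le := H (fun x ↦ φ (f x)) ⟨L, hφf⟩ ⟨n, fun x ↦ (habs _).trans_le (min_le_right _ _)⟩
  simp only [habs] at hφf_le
  refine hφf_le.trans (mul_le_mul_of_nonneg_left ?_ hC)
  exact integral_mono (integrable_metricSubgradient_rpow hφf hq)
    (integrable_metricSubgradient_rpow hf hq) fun x ↦ Real.rpow_le_rpow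
      (metricSubgradient_nonneg hφf x) (metricSubgradient_comp_le_of_monotone hf hφmono hφ x) hq

end Truncation

section Hypercontractivity

variable {X : Type*} [MetricSpace X] [MeasurableSpace X] {μ : Measure X} {p q a ρ : ℝ}

/-- Hypercontractivity of the Hopf–Lax semigroup with initial exponent `a` and growth rate `ρ`:
`‖e^{Q_t f}‖_{L^{a+ρt}} ≤ ‖e^f‖_{L^a}` for all bounded measurable `f` and `t ≥ 0`. -/
def HopfLaxHypercontractive (p : ℝ) (μ : Measure X) (a ρ : ℝ) : Prop :=
  ∀ f : X → ℝ, Measurable f → (∃ M : ℝ, ∀ x, |f x| ≤ M) → ∀ t : ℝ, 0 ≤ t →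
    (∫ x, Real.exp ((a + ρ * t) * hopfLaxP p f t x) ∂μ) ^ (1 / (a + ρ * t)) ≤
      (∫ x, Real.exp (a * f x) ∂μ) ^ (1 / a)

lemma entropyFn_exp_le_of_forall_hopfLaxRate [IsProbabilityMeasure μ] [OpensMeasurableSpace X]
    (hpq : p.HolderConjugate q) (ha : 0 < a) (hρ : 0 < ρ) {u v : X → ℝ} {L : ℝ≥0}
    (hv : LipschitzWith L v) {m M : ℝ} (hm : ∀ x, m ≤ v x) {g : ℝ → X → ℝ}
    (hg : ∀ t > 0, Measurable (g t)) (hM : ∀ t > 0, ∀ x, |g t x| ≤ M)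
    (hlim : ∀ x, Tendsto (g · x) (𝓝[>] 0) (𝓝 (u x)))
    (hle : ∀ t > 0, entropyFn μ (fun x ↦ Real.exp (a * g t x)) ≤
      a * (a + ρ * t) / ρ * ∫ x, Real.exp (a * g t x) * hopfLaxRate p v t x ∂μ) :
    entropyFn μ (fun x ↦ Real.exp (a * u x)) ≤
      a ^ 2 / ρ * ∫ x, Real.exp (a * u x) * (metricSubgradient v x ^ q / q) ∂μ := by
  obtain ⟨t, -, ht0, htlim⟩ := exists_seq_strictAnti_tendsto_nhdsWithin (0 : ℝ)
  let w (n : ℕ) (x : X) : ℝ := Real.exp (a * g (t n) x)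
  have w0 (n : ℕ) (x : X) : 0 ≤ w n x := (Real.exp_pos _).le
  have hw (n : ℕ) : Measurable (w n) := ((hg _ (ht0 n)).const_mul a).exp
  have hwM (n : ℕ) (x : X) : w n x ≤ Real.exp (a * M) :=
    Real.exp_le_exp.2 (mul_le_mul_of_nonneg_left (le_of_abs_le (hM _ (ht0 n) x)) ha.le)
  have hwlim (x : X) : Tendsto (w · x) atTop (𝓝 (Real.exp (a * u x))) :=
    (((hlim x).comp htlim).const_mul a).rexp
  have hintegral := tendsto_integral_mul_max_hopfLaxRate (μ := μ) hpq hv hm ht0 htlim hw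
    (fun n x ↦ (Real.norm_of_nonneg (w0 n x)).trans_le (hwM n x)) hwlim
  have hconst : Tendsto (fun n ↦ a * (a + ρ * t n) / ρ) atTop (𝓝 (a ^ 2 / ρ)) := by
    have hcont : Continuous fun s : ℝ ↦ a * (a + ρ * s) / ρ := by fun_prop
    simpa [sq, Function.comp_def] using
      ((hcont.tendsto 0).mono_left nhdsWithin_le_nhds).comp htlim
  refine entropyFn_le_of_tendsto (fun n ↦ (hw n).aestronglyMeasurable) w0
    (integrable_const (Real.exp (a * M))) hwM
    (fun n ↦ integrable_mul_log_of_bounded (hw n) (w0 n) (hwM n))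
    hwlim (hconst.mul hintegral) fun n ↦ (hle _ (ht0 n)).trans ?_
  have := ht0 n
  exact mul_le_mul_of_nonneg_left (integral_mul_hopfLaxRate_le hpq (ht0 n) hv hm (w0 n)
    (integrable_exp_mul_of_abs_le (hg _ (ht0 n)) (hM _ (ht0 n)) a)) (by positivity)

namespace HopfLaxHypercontractive

lemma log_integral_exp_hopfLaxP_le [IsProbabilityMeasure μ] [OpensMeasurableSpace X]
    (H : HopfLaxHypercontractive p μ a ρ) (hp : 0 < p) (ha : 0 < a) (hρ : 0 < ρ) {g : X → ℝ}
    (hg : Measurable g) {M : ℝ} (hM : ∀ x, |g x| ≤ M) {t : ℝ} (ht : 0 < t) :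
    Real.log (∫ x, Real.exp ((a + ρ * t) * hopfLaxP p g t x) ∂μ) ≤
      (a + ρ * t) / a * Real.log (∫ x, Real.exp (a * g x) ∂μ) := by
  have hb : 0 < a + ρ * t := by positivity
  have hQpos := integral_exp_pos (integrable_exp_mul_of_abs_le (μ := μ)
    (measurable_hopfLaxP hp ht fun y ↦ neg_le_of_abs_le (hM y)) (abs_hopfLaxP_le hp ht hM)
    (a + ρ * t))
  have hgpos := integral_exp_pos (integrable_exp_mul_of_abs_le (μ := μ) hg hM a)
  have hlog := Real.log_le_log (Real.rpow_pos_of_pos hQpos _) (H g hg ⟨M, hM⟩ t ht.le)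
  rw [Real.log_rpow hQpos, Real.log_rpow hgpos, one_div_mul_eq_div, div_le_iff₀ hb] at hlog
  exact hlog.trans_eq (by ring)

-- Combine the Gibbs variational principle at `φ = (a + ρ t) Q_t g` with hypercontractivity.
lemma entropyFn_exp_le [IsProbabilityMeasure μ] [OpensMeasurableSpace X]
    (H : HopfLaxHypercontractive p μ a ρ) (hp : 0 < p) (ha : 0 < a) (hρ : 0 < ρ) {g : X → ℝ}
    (hg : Measurable g) {M : ℝ} (hM : ∀ x, |g x| ≤ M) {t : ℝ} (ht : 0 < t) :
    entropyFn μ (fun x ↦ Real.exp (a * g x)) ≤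
      a * (a + ρ * t) / ρ * ∫ x, Real.exp (a * g x) * hopfLaxRate p g t x ∂μ := by
  let Q := hopfLaxP p g t
  have hQ : Measurable Q := measurable_hopfLaxP hp ht fun y ↦ neg_le_of_abs_le (hM y)
  have hQM : ∀ x, |Q x| ≤ M := abs_hopfLaxP_le hp ht hM
  have hexp := integrable_exp_mul_of_abs_le (μ := μ) hg hM a
  have hweight {f : X → ℝ} (hf : Measurable f) (hfM : ∀ x, |f x| ≤ M) :
      Integrable (fun x ↦ Real.exp (a * g x) * f x) μ :=
    hexp.mul_bdd (c := M) hf.aestronglyMeasurable (.of_forall hfM)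
  have hgint := hweight hg hM
  have hQint := hweight hQ hQM
  have hent := entropyFn_exp_mul (μ := μ) a g
  have hgibbs := integral_mul_le_entropyFn_add (φ := fun x ↦ (a + ρ * t) * Q x)
    (fun x ↦ (Real.exp_pos (a * g x)).le) (integral_exp_pos hexp)
    (by simpa only [Real.log_exp, mul_left_comm _ a] using hgint.const_mul a)
    (by simpa only [mul_left_comm _ (a + ρ * t)] using hQint.const_mul (a + ρ * t))
    (integrable_exp_mul_of_abs_le hQ hQM _)
  have hhyper := mul_le_mul_of_nonneg_left
    (H.log_integral_exp_hopfLaxP_le hp ha hρ hg hM ht) (integral_exp_pos hexp).le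
  have hrate : ∫ x, Real.exp (a * g x) * hopfLaxRate p g t x ∂μ =
      (∫ x, Real.exp (a * g x) * g x ∂μ - ∫ x, Real.exp (a * g x) * Q x ∂μ) / t := by
    simp only [hopfLaxRate, ← mul_div_assoc, mul_sub]
    rw [integral_div, integral_sub hgint hQint]
  simp only [mul_left_comm _ (a + ρ * t), integral_const_mul] at hgibbs
  rw [hrate]
  set A := ∫ x, Real.exp (a * g x) * g x ∂μ
  set B := ∫ x, Real.exp (a * g x) * Q x ∂μ
  set Z := ∫ x, Real.exp (a * g x) ∂μ
  set E := entropyFn μ fun x ↦ Real.exp (a * g x)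
  have hkey : E * (ρ * t) ≤ a * (a + ρ * t) * (A - B) := by
    have hcombine : (a + ρ * t) * B ≤ E + (a + ρ * t) / a * (a * A - E) := by
      rw [hent]
      linarith
    rw [div_mul_eq_mul_div, ← sub_le_iff_le_add', le_div_iff₀ ha] at hcombine
    linarith
  rwa [div_mul_div_comm, le_div_iff₀ (by positivity)]

-- For `σ = 1` take the constant family `g t = u`. For `σ = -1` run the semigroup backwards from
-- `u`: `g t = -Q_t (-u)` satisfies `u ≤ Q_t (g t)`, so that `g t - Q_t (g t) ≤ (-u) - Q_t (-u)`.
lemma entropyFn_exp_le_integral_metricSubgradient [IsProbabilityMeasure μ] [OpensMeasurableSpace X]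
    (H : HopfLaxHypercontractive p μ a ρ) (hpq : p.HolderConjugate q) (ha : 0 < a) (hρ : 0 < ρ)
    (σ : ℤˣ) {u : X → ℝ} {L : ℝ≥0} (hu : LipschitzWith L u) {M : ℝ} (hM : ∀ x, |u x| ≤ M) :
    entropyFn μ (fun x ↦ Real.exp (a * u x)) ≤
      a ^ 2 / ρ * ∫ x, Real.exp (a * u x) * (metricSubgradient (σ • u) x ^ q / q) ∂μ := by
  have hp : 0 < p := hpq.pos
  have hum := hu.continuous.measurable
  rcases Int.units_eq_one_or σ with rfl | rfl
  · rw [one_smul]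
    exact entropyFn_exp_le_of_forall_hopfLaxRate hpq ha hρ hu (fun x ↦ neg_le_of_abs_le (hM x))
      (fun _ _ ↦ hum) (fun _ _ ↦ hM) (fun x ↦ tendsto_const_nhds)
      fun t ht ↦ H.entropyFn_exp_le hp ha hρ hum hM ht
  · rw [Units.neg_smul, one_smul]
    have hnegM (x : X) : |(-u) x| ≤ M := by simpa using hM x
    have hlow (x : X) : -M ≤ (-u) x := neg_le_of_abs_le (hnegM x)
    have hg (t : ℝ) (ht : 0 < t) : Measurable (-hopfLaxP p (-u) t) :=
      (measurable_hopfLaxP hp ht hlow).neg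
    have hgM (t : ℝ) (ht : 0 < t) (x : X) : |(-hopfLaxP p (-u) t) x| ≤ M := by
      simpa using abs_hopfLaxP_le hp ht hnegM x
    refine entropyFn_exp_le_of_forall_hopfLaxRate hpq ha hρ hu.neg hlow hg hgM
      (fun x ↦ by simpa using (tendsto_hopfLaxP hpq hu.neg hlow x).neg) fun t ht ↦
      (H.entropyFn_exp_le hp ha hρ (hg t ht) (hgM t ht) ht).trans ?_
    have hexp := integrable_exp_mul_of_abs_le (μ := μ) (hg t ht) (hgM t ht) a
    refine mul_le_mul_of_nonneg_left (integral_mono_of_nonneg (.of_forall fun x ↦ ?_)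
      (integrable_mul_hopfLaxRate hpq ht hu.neg hlow hexp) (.of_forall fun x ↦ ?_))
      (by positivity)
    · exact mul_nonneg (Real.exp_pos _).le
        (hopfLaxRate_nonneg hp ht (fun y ↦ neg_le_of_abs_le (hgM t ht y)) x)
    · have hback := le_hopfLaxP_neg_hopfLaxP_neg hp ht (fun y ↦ le_of_abs_le (hM y)) x
      refine mul_le_mul_of_nonneg_left (div_le_div_of_nonneg_right ?_ ht.le) (Real.exp_pos _).le
      rw [Pi.neg_apply, Pi.neg_apply]
      linarith

end HopfLaxHypercontractive

end Hypercontractivity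

section LogSobolev

lemma lipschitzOnWith_log_Ici {ε : ℝ≥0} (hε : 0 < ε) :
    LipschitzOnWith ε⁻¹ Real.log (Set.Ici (ε : ℝ)) := by
  refine LipschitzOnWith.of_le_add_mul _ fun x hx y hy ↦ ?_
  have hε' : (0 : ℝ) < ε := hε
  have hx0 : 0 < x := hε'.trans_le hx
  have hy0 : 0 < y := hε'.trans_le hy
  have hlog := Real.log_le_sub_one_of_pos (div_pos hx0 hy0)
  rw [Real.log_div hx0.ne' hy0.ne', div_sub_one hy0.ne'] at hlog
  have hslope : (x - y) / y ≤ dist x y / ε :=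
    div_le_div₀ dist_nonneg (le_abs_self _) hε' hy
  rw [NNReal.coe_inv, inv_mul_eq_div]
  linarith

lemma sq_div_mul_rpow_eq_of_rpow_mul_rpow_eq {a ρ q K : ℝ} (ha : 0 < a) (hρ : 0 < ρ)
    (hq : 0 < q) (hK : 0 < K) (hconst : a ^ (2 - q) * K ^ (q - 1) = ρ * (q - 1)) :
    a ^ 2 / ρ * ((q / a) ^ q / q) = (q - 1) * (q / K) ^ (q - 1) := by
  have haq : 0 < a ^ q := Real.rpow_pos_of_pos ha q
  have hKq : 0 < K ^ (q - 1) := Real.rpow_pos_of_pos hK _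
  rw [Real.rpow_sub ha, Real.rpow_two] at hconst
  rw [Real.div_rpow hq.le ha.le, Real.div_rpow hq.le hK.le, Real.rpow_sub_one hq.ne' q]
  generalize K ^ (q - 1) = k at *
  generalize a ^ q = b at *
  field_simp at hconst ⊢
  linear_combination hconst

variable {X : Type*} [MetricSpace X] {p q a ρ : ℝ} {h : X → ℝ} {L : ℝ≥0}

lemma lipschitzWith_log_comp (hh : LipschitzWith L h) {ε : ℝ} (hε : 0 < ε) (hεh : ∀ x, ε ≤ h x) :
    ∃ K, LipschitzWith K fun x ↦ Real.log (h x) := by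
  lift ε to ℝ≥0 using hε.le
  exact ⟨ε⁻¹ * L, lipschitzOnWith_univ.1
    ((lipschitzOnWith_log_Ici hε).comp hh.lipschitzOnWith fun x _ ↦ hεh x)⟩

lemma rpow_mul_metricSubgradient_log_rpow_le (σ : ℤˣ) (hh : LipschitzWith L h) {K : ℝ≥0} {c : ℝ}
    (hc : 0 < c) (hlog : LipschitzWith K fun x ↦ c * Real.log (h x)) (hq : 0 ≤ q) {x : X}
    (hx : 0 < h x) :
    h x ^ q * metricSubgradient (σ • fun y ↦ c * Real.log (h y)) x ^ q ≤
      c ^ q * metricSubgradient (σ • h) x ^ q := by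
  have hchain := metricSubgradient_units_smul_comp_le_of_hasDerivAt σ hh
    ((Real.hasDerivAt_log hx.ne').const_mul c) (mul_pos hc (inv_pos.2 hx))
  have hlog0 := metricSubgradient_nonneg (lipschitzWith_units_smul σ hlog) x
  have hh0 := metricSubgradient_nonneg (lipschitzWith_units_smul σ hh) x
  rw [← Real.mul_rpow hx.le hlog0, ← Real.mul_rpow hc.le hh0]
  refine Real.rpow_le_rpow (by positivity) ?_ hq
  calc h x * metricSubgradient (σ • fun y ↦ c * Real.log (h y)) x
      ≤ h x * (c * (h x)⁻¹ * metricSubgradient (σ • h) x) := by gcongr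
    _ = c * metricSubgradient (σ • h) x := by field_simp

variable [MeasurableSpace X] [OpensMeasurableSpace X] {μ : Measure X} [IsProbabilityMeasure μ]

-- Apply the exponential inequality to `u = (q / a) log h`, for which `exp (a u) = h ^ q`.
lemma HopfLaxHypercontractive.entropyFn_rpow_le_integral_metricSubgradient
    (H : HopfLaxHypercontractive p μ a ρ) (hpq : p.HolderConjugate q) (ha : 0 < a) (hρ : 0 < ρ)
    (σ : ℤˣ) (hh : LipschitzWith L h) {ε M : ℝ} (hε : 0 < ε) (hεh : ∀ x, ε ≤ h x)
    (hM : ∀ x, h x ≤ M) :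
    entropyFn μ (fun x ↦ h x ^ q) ≤
      a ^ 2 / ρ * ((q / a) ^ q / q) * ∫ x, metricSubgradient (σ • h) x ^ q ∂μ := by
  have hq : 0 < q := hpq.symm.pos
  have hqa : 0 < q / a := div_pos hq ha
  have h0 (x : X) : 0 < h x := hε.trans_le (hεh x)
  let u (x : X) : ℝ := q / a * Real.log (h x)
  obtain ⟨K, hu⟩ : ∃ K, LipschitzWith K u :=
    let ⟨_, hlog⟩ := lipschitzWith_log_comp hh hε hεh
    ⟨_, (lipschitzWith_smul (q / a)).comp hlog⟩
  obtain ⟨C, hC⟩ : ∃ C, ∀ x, |u x| ≤ C :=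
    ⟨q / a * max |Real.log ε| |Real.log M|, fun x ↦ by
      rw [abs_mul, abs_of_pos hqa]
      gcongr
      exact abs_le_max_abs_abs (Real.log_le_log hε (hεh x)) (Real.log_le_log (h0 x) (hM x))⟩
  have hexp (x : X) : Real.exp (a * u x) = h x ^ q := by
    rw [Real.rpow_def_of_pos (h0 x), ← mul_assoc, mul_div_cancel₀ _ ha.ne', mul_comm]
  have hmain := H.entropyFn_exp_le_integral_metricSubgradient hpq ha hρ σ hu hC
  simp only [hexp, ← mul_div_assoc, integral_div] at hmain
  have hchain : ∫ x, h x ^ q * metricSubgradient (σ • u) x ^ q ∂μ ≤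
      (q / a) ^ q * ∫ x, metricSubgradient (σ • h) x ^ q ∂μ := by
    rw [← integral_const_mul]
    refine integral_mono_of_nonneg (.of_forall fun x ↦ ?_)
      ((integrable_metricSubgradient_rpow (lipschitzWith_units_smul σ hh) hq.le).const_mul _)
      (.of_forall fun x ↦ rpow_mul_metricSubgradient_log_rpow_le σ hh hqa hu hq.le (h0 x))
    exact mul_nonneg (Real.rpow_nonneg (h0 x).le q)
      (Real.rpow_nonneg (metricSubgradient_nonneg (lipschitzWith_units_smul σ hu) x) q)
  calc entropyFn μ (fun x ↦ h x ^ q)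
      ≤ a ^ 2 / ρ * (∫ x, h x ^ q * metricSubgradient (σ • u) x ^ q ∂μ) / q := by
        simpa only [mul_div_assoc] using hmain
    _ ≤ a ^ 2 / ρ * ((q / a) ^ q * ∫ x, metricSubgradient (σ • h) x ^ q ∂μ) / q := by gcongr
    _ = _ := by ring

theorem hypercontractivity_implies_qLSI_general {K₀ : ℝ} (hpq : p.HolderConjugate q) (ha : 0 < a)
    (hρ : 0 < ρ) (hhc : HopfLaxHypercontractive p μ a ρ) (hK₀ : 0 < K₀)
    (hconst : a ^ (2 - q) * K₀ ^ (q - 1) = ρ * (q - 1)) : QLogSobolev μ q K₀ := by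
  have hq : 0 < q := hpq.symm.pos
  have hC : 0 ≤ a ^ 2 / ρ * ((q / a) ^ q / q) := by positivity
  rintro f ⟨L, hf⟩
  rw [← sq_div_mul_rpow_eq_of_rpow_mul_rpow_eq ha hρ hq hK₀ hconst]
  refine entropyFn_abs_rpow_le_of_forall_bounded hq.le hC hf fun g ⟨_, hg⟩ ⟨_, hgM⟩ ↦ ?_
  refine entropyFn_abs_rpow_le_of_forall_nonneg hq hC hg hgM fun σ k ⟨_, hk⟩ k0 ⟨_, hkM⟩ ↦ ?_
  refine entropyFn_rpow_le_of_forall_pos hq.le σ hk k0 hkM fun h ⟨_, hh⟩ ⟨_, hε, hεh⟩ ⟨_, hM⟩ ↦ ?_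
  exact hhc.entropyFn_rpow_le_integral_metricSubgradient hpq ha hρ σ hh hε hεh hM

end LogSobolev

/-- Hypercontractivity of the Hamilton–Jacobi (Hopf–Lax) semigroup implies the
`q`-log-Sobolev inequality with the constant `K₀` determined by
`a^{2−q}·K₀^{q−1} = ρ·(q−1)`. -/
theorem hypercontractivity_implies_qLSI
    {X : Type*} [MetricSpace X] [ProperSpace X] [Nonempty X]
    [MeasurableSpace X] [BorelSpace X]
    (hgeo : ∀ x y : X, ∀ τ : ℝ, 0 ≤ τ → τ ≤ 1 →
      ∃ z : X, dist x z = τ * dist x y ∧ dist z y = (1 - τ) * dist x y)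
    (μ : Measure X) [IsProbabilityMeasure μ]
    (hdoub : IsDoublingMeasure μ)
    (s : ℝ) (hs : 1 ≤ s) (hpoin : LocalPoincareIneq μ s)
    (p q : ℝ) (hq1 : 1 < q) (hq2 : q ≤ 2) (hp : 2 ≤ p) (hpq : 1 / p + 1 / q = 1)
    (a ρ : ℝ) (ha : 0 < a) (hρ : 0 < ρ)
    (hhc : ∀ f : X → ℝ, Measurable f → (∃ M : ℝ, ∀ x, |f x| ≤ M) → ∀ t : ℝ, 0 ≤ t →
      (∫ x, Real.exp ((a + ρ * t) * hopfLaxP p f t x) ∂μ) ^ (1 / (a + ρ * t)) ≤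
        (∫ x, Real.exp (a * f x) ∂μ) ^ (1 / a))
    (K₀ : ℝ) (hK₀ : 0 < K₀) (hconst : a ^ (2 - q) * K₀ ^ (q - 1) = ρ * (q - 1)) :
    QLogSobolev μ q K₀ :=
  hypercontractivity_implies_qLSI_general
    (Real.holderConjugate_iff.2 ⟨by linarith, by simpa [one_div] using hpq⟩) ha hρ hhc hK₀ hconst
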